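/- arXiv:1707.05389 — 3 statements merged into one kernel-verified Lean document; each statement's English description precedes it below -/
import Mathlib

section
/- Let c ∈ ℝ and let U : ℝ → ℝ be a smooth function with U(ξ) ≠ 0 for all ξ, satisfying for all ξ the travelling-wave ODE −c( U' − U''' ) + U' (U − U'') U^{−3} + d/dξ[ (U − U'') U^{−2} ] = 0. Then both of the functions ξ ↦ (U − U'')² ( c − 1/U² ) and ξ ↦ −c( U² + U'² ) + 2c U U'' + 2(U − U'')/U are constant on ℝ (they are the first integrals arising from the conserved L² norm of m and the conserved H¹ norm, respectively). -/
open Real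

/-!
Put `m = U - U''` and let `R` denote the left-hand side of the ODE. Each first integral comes from
an integrating factor: `-2 m R` is the derivative of `m² (c - 1 / U²)`, and `2 U R` is the
derivative of `-c (U² + U'²) + 2 c U U'' + 2 m / U`.
-/

namespace SingularMultiPeakon

section Pointwise

variable {𝕜 F : Type*} [NontriviallyNormedField 𝕜] [NontriviallyNormedField F] [NormedAlgebra 𝕜 F]
  {u v w m : 𝕜 → F} {u' w' m' : F} {ξ : 𝕜}

/-- The left-hand side `-c m' + u' m / u³ + (m / u²)'` of the travelling-wave equation, with the
last derivative expanded, as a function of the values `u`, `u'`, `m`, `m'` at one point. Keeping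
`m` independent of `u` separates the transport structure from the relation `m = u - u''`. -/
def travellingWaveResidual (c u u' m m' : F) : F :=
  -c * m' + u' * m / u ^ 3 + (m' / u ^ 2 - 2 * m * u' / u ^ 3)

theorem hasDerivAt_div_sq (hu : HasDerivAt u u' ξ) (hm : HasDerivAt m m' ξ) (hne : u ξ ≠ 0) :
    HasDerivAt (fun s => m s / u s ^ 2) (m' / u ξ ^ 2 - 2 * m ξ * u' / u ξ ^ 3) ξ := by
  refine (hm.fun_div (hu.fun_pow 2) (pow_ne_zero 2 hne)).congr_deriv ?_
  field_simp
  push_cast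
  ring

theorem hasDerivAt_sq_mul_sub_one_div_sq (c : F) (hu : HasDerivAt u u' ξ)
    (hm : HasDerivAt m m' ξ) (hne : u ξ ≠ 0) :
    HasDerivAt (fun s => m s ^ 2 * (c - 1 / u s ^ 2))
      (-2 * m ξ * travellingWaveResidual c (u ξ) u' (m ξ) m') ξ := by
  have h_inv_sq := hasDerivAt_div_sq hu (hasDerivAt_const ξ (1 : F)) hne
  refine ((hm.fun_pow 2).fun_mul (h_inv_sq.const_sub c)).congr_deriv ?_
  simp only [travellingWaveResidual]
  field_simp
  push_cast
  ring

theorem hasDerivAt_energy_first_integral (c : F) (hu : HasDerivAt u (v ξ) ξ)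
    (hv : HasDerivAt v (w ξ) ξ) (hw : HasDerivAt w w' ξ) (hne : u ξ ≠ 0) :
    HasDerivAt
      (fun s => -c * (u s ^ 2 + v s ^ 2) + 2 * c * u s * w s + 2 * (u s - w s) / u s)
      (2 * u ξ * travellingWaveResidual c (u ξ) (v ξ) (u ξ - w ξ) (v ξ - w')) ξ := by
  have h_squares := ((hu.fun_pow 2).fun_add (hv.fun_pow 2)).const_mul (-c)
  have h_product := (hu.const_mul (2 * c)).fun_mul hw
  have h_quotient := ((hu.fun_sub hw).const_mul 2).fun_div hu hne
  refine ((h_squares.fun_add h_product).fun_add h_quotient).congr_deriv ?_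
  simp only [travellingWaveResidual]
  field_simp
  push_cast
  ring

end Pointwise

theorem exists_eq_const_of_hasDerivAt_zero {𝕜 E : Type*} [RCLike 𝕜] [NormedAddCommGroup E]
    [NormedSpace 𝕜 E] {Ω : Set 𝕜} (hΩ : IsOpen Ω) (hΩ' : IsPreconnected Ω) {f : 𝕜 → E}
    (hf : ∀ ξ ∈ Ω, HasDerivAt f 0 ξ) : ∃ a, ∀ ξ ∈ Ω, f ξ = a :=
  hΩ.exists_is_const_of_deriv_eq_zero hΩ'
    (fun ξ hξ => (hf ξ hξ).differentiableAt.differentiableWithinAt) fun ξ hξ => (hf ξ hξ).deriv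

end SingularMultiPeakon

open SingularMultiPeakon

theorem singular_equation_first_integrals_general {𝕜 F : Type*} [RCLike 𝕜]
    [NontriviallyNormedField F] [NormedAlgebra 𝕜 F] {Ω : Set 𝕜} (hΩ : IsOpen Ω)
    (hΩ' : IsPreconnected Ω) (c : F) {U : 𝕜 → F}
    (hU : DifferentiableOn 𝕜 U Ω) (hU' : DifferentiableOn 𝕜 (deriv U) Ω)
    (hU'' : DifferentiableOn 𝕜 (deriv (deriv U)) Ω) (hne : ∀ ξ ∈ Ω, U ξ ≠ 0)
    (hode : ∀ ξ ∈ Ω,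
      -c * (deriv U ξ - deriv (deriv (deriv U)) ξ)
        + deriv U ξ * (U ξ - deriv (deriv U) ξ) / (U ξ) ^ 3
        + deriv (fun s => (U s - deriv (deriv U) s) / (U s) ^ 2) ξ = 0) :
    (∃ c1 : F, ∀ ξ ∈ Ω, (U ξ - deriv (deriv U) ξ) ^ 2 * (c - 1 / (U ξ) ^ 2) = c1) ∧
    (∃ c2 : F, ∀ ξ ∈ Ω,
      -c * ((U ξ) ^ 2 + (deriv U ξ) ^ 2)
        + 2 * c * U ξ * deriv (deriv U) ξ
        + 2 * (U ξ - deriv (deriv U) ξ) / U ξ = c2) := by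
  have hasDerivAt_of_mem {f : 𝕜 → F} (hf : DifferentiableOn 𝕜 f Ω) {ξ} (hξ : ξ ∈ Ω) :
      HasDerivAt f (deriv f ξ) ξ := hf.hasDerivAt (hΩ.mem_nhds hξ)
  have hasDerivAt_momentum {ξ} (hξ : ξ ∈ Ω) :
      HasDerivAt (fun s => U s - deriv (deriv U) s)
        (deriv U ξ - deriv (deriv (deriv U)) ξ) ξ :=
    (hasDerivAt_of_mem hU hξ).fun_sub (hasDerivAt_of_mem hU'' hξ)
  have residual_eq_zero {ξ} (hξ : ξ ∈ Ω) :
      travellingWaveResidual c (U ξ) (deriv U ξ) (U ξ - deriv (deriv U) ξ)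
        (deriv U ξ - deriv (deriv (deriv U)) ξ) = 0 := by
    have h_flux :=
      hasDerivAt_div_sq (hasDerivAt_of_mem hU hξ) (hasDerivAt_momentum hξ) (hne ξ hξ)
    rw [travellingWaveResidual, ← h_flux.deriv, hode ξ hξ]
  refine ⟨exists_eq_const_of_hasDerivAt_zero hΩ hΩ' fun ξ hξ => ?_,
    exists_eq_const_of_hasDerivAt_zero hΩ hΩ' fun ξ hξ => ?_⟩
  · have h := hasDerivAt_sq_mul_sub_one_div_sq c (hasDerivAt_of_mem hU hξ)
      (hasDerivAt_momentum hξ) (hne ξ hξ)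
    rwa [residual_eq_zero hξ, mul_zero] at h
  · have h := hasDerivAt_energy_first_integral c (hasDerivAt_of_mem hU hξ)
      (hasDerivAt_of_mem hU' hξ) (hasDerivAt_of_mem hU'' hξ) (hne ξ hξ)
    rwa [residual_eq_zero hξ, mul_zero] at h

/-- the two first integrals of the travelling-wave reduction of the
singular multi-peakon equation `m_t + u_x u⁻³ m + ∂_x(u⁻² m) = 0`. -/
theorem singular_equation_first_integrals
    (c : ℝ)
    (U : ℝ → ℝ) (hU : ContDiff ℝ (⊤ : ℕ∞) U)
    (hne : ∀ ξ : ℝ, U ξ ≠ 0)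
    (hode : ∀ ξ : ℝ,
      -c * (deriv U ξ - deriv (deriv (deriv U)) ξ)
        + deriv U ξ * (U ξ - deriv (deriv U) ξ) / (U ξ)^3
        + deriv (fun s => (U s - deriv (deriv U) s) / (U s)^2) ξ = 0) :
    (∃ c1 : ℝ, ∀ ξ : ℝ,
      (U ξ - deriv (deriv U) ξ)^2 * (c - 1 / (U ξ)^2) = c1)
    ∧
    (∃ c2 : ℝ, ∀ ξ : ℝ,
      -c * ((U ξ)^2 + (deriv U ξ)^2)
        + 2 * c * U ξ * deriv (deriv U) ξ
        + 2 * (U ξ - deriv (deriv U) ξ) / U ξ = c2) := by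
  have hdiff (k : ℕ) : DifferentiableOn ℝ (deriv^[k] U) Set.univ :=
    ((hU.iterate_deriv k).differentiable (by simp)).differentiableOn
  simpa using singular_equation_first_integrals_general isOpen_univ isPreconnected_univ c
    (hdiff 0) (hdiff 1) (hdiff 2) (fun ξ _ => hne ξ) (fun ξ _ => hode ξ)
end

section
/- Let D = { (a,b) ∈ ℝ² : a > |b| } and let h1, h2, h3 : D → ℝ be smooth. For (a,b,c) ∈ D × ℝ define k(a,b,c) = h1(a,b)(a−c) + h2(a,b)(a−c)² + h3(a,b)(a−c)³, and for each smooth u : ℝ → ℝ with (u(x), u'(x)) ∈ D for all x, define the Euler expression E_u[k](x) = (∂k/∂a)(u,u',u'') − d/dx[ (∂k/∂b)(u,u',u'') ] + d²/dx²[ (∂k/∂c)(u,u',u'') ], where u, u', u'' are evaluated at x. Then E_u[k] vanishes identically for every such smooth u if and only if h2 ≡ 0, h3 ≡ 0, and there exist a smooth function k1 : (0,∞) → ℝ and a constant k0 ∈ ℝ such that h1(a,b) = b · k1(a² − b²) + k0 · a/(a² − b²) for all (a,b) ∈ D. -/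
open Real

noncomputable section

/-- The Euler expression `E_u[k] = ∂_a k − d/dx(∂_b k) + d²/dx²(∂_c k)`, evaluated
along the curve `x ↦ (u x, u' x, u'' x)`; the variables `a, b, c` play the roles of
`u, u_x, u_xx`. -/
def eulerExpr (k : ℝ → ℝ → ℝ → ℝ) (u : ℝ → ℝ) (x : ℝ) : ℝ :=
  deriv (fun s => k s (deriv u x) (deriv (deriv u) x)) (u x)
    - deriv (fun y => deriv (fun s => k (u y) s (deriv (deriv u) y)) (deriv u y)) x
    + deriv (deriv (fun y => deriv (fun s => k (u y) (deriv u y) s)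
        (deriv (deriv u) y))) x

/-!
A smooth `u` with `|u'| < u` can have any prescribed jet at a point compatible with this inequality,
so `E_u[k] = 0` for all such `u` amounts to identities in independent jet variables. The fourth
derivative of `u` enters `E_u[k]` with coefficient `∂²k/∂c² = 2 h₂ + 6 h₃ (a - c)`, whence
`h₂ = h₃ = 0`.

For `k = f(a, b) (a - c)`, write `L = b ∂_a + a ∂_b` for the generator of the boosts preserving
`a² - b²`. Then `E_u[k] = (f - L² f) + (u - u'') (∂_a f + ∂_b L f)` at `(u, u')`, so `E_u[k]`
vanishes for all `u` exactly when `L² f = f` and `∂_a f + ∂_b L f = 0` on the cone. These equations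
say that `a f - b L f` has zero differential, hence is a constant `k₀`, and imply that `a L f - b f`
is killed by `L`, hence is a function of `a² - b²`. Solving the two relations for `f` gives the
stated form.
-/

open Filter Set Function Topology
open scoped ContDiff

section SecondDerivative

variable {E F : Type*} [NormedAddCommGroup E] [NormedSpace ℝ E] [NormedAddCommGroup F]
  [NormedSpace ℝ F]

lemma differentiableAt_fderiv_of_contDiffAt {g : E → F} {p : E} (hg : ContDiffAt ℝ 2 g p) :
    DifferentiableAt ℝ (fderiv ℝ g) p :=
  (hg.fderiv_right_succ (n := 1)).differentiableAt one_ne_zero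

lemma deriv_deriv_comp {g : E → F} {γ γ' : ℝ → E} {γ'' : E} {x : ℝ}
    (hg : ∀ y, ContDiffAt ℝ 2 g (γ y)) (hγ : ∀ y, HasDerivAt γ (γ' y) y)
    (hγ' : HasDerivAt γ' γ'' x) :
    deriv (deriv (fun y => g (γ y))) x =
      fderiv ℝ (fderiv ℝ g) (γ x) (γ' x) (γ' x) + fderiv ℝ g (γ x) γ'' := by
  have hderiv : deriv (fun y => g (γ y)) = fun y => fderiv ℝ g (γ y) (γ' y) :=
    funext fun y =>
      (((hg y).differentiableAt two_ne_zero).hasFDerivAt.comp_hasDerivAt y (hγ y)).deriv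
  rw [hderiv]
  exact (((differentiableAt_fderiv_of_contDiffAt (hg x)).hasFDerivAt.comp_hasDerivAt x
    (hγ x)).clm_apply hγ').deriv

end SecondDerivative

/-! ### Admissible functions with prescribed jets -/

lemma deriv_iterate_polynomial_eval (p : Polynomial ℝ) (i : ℕ) (x : ℝ) :
    deriv^[i] (fun x => p.eval x) x = (Polynomial.derivative^[i] p).eval x := by
  induction i generalizing x with
  | zero => rfl
  | succ i ih => rw [iterate_succ_apply', iterate_succ_apply', funext ih, Polynomial.deriv]

lemma exists_polynomial_deriv_iterate_eq (f : ℕ → ℝ) (N : ℕ) (x₀ : ℝ) :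
    ∃ p : Polynomial ℝ, ∀ i < N, deriv^[i] (fun x => p.eval x) x₀ = f i := by
  let q : Polynomial ℝ := ∑ i ∈ Finset.range N, Polynomial.monomial i (f i / i.factorial)
  refine ⟨q.taylor (-x₀), fun i hi => ?_⟩
  have htaylor : (Polynomial.hasseDeriv i (q.taylor (-x₀))).eval x₀ = q.coeff i := by
    rw [← Polynomial.taylor_coeff, Polynomial.taylor_taylor, add_neg_cancel,
      Polynomial.taylor_zero]
  have hcoeff : q.coeff i = f i / i.factorial := by
    simp [q, Polynomial.finsetSum_coeff, Polynomial.coeff_monomial, hi]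
  rw [deriv_iterate_polynomial_eval, ← Polynomial.factorial_smul_hasseDeriv,
    LinearMap.smul_apply, Polynomial.eval_smul, htaylor, hcoeff, nsmul_eq_mul]
  field_simp

lemma exists_contDiff_eventuallyEq_id_abs_deriv_le_one (x₀ : ℝ) {ε : ℝ} (hε : 0 < ε) :
    ∃ θ : ℝ → ℝ, ContDiff ℝ ∞ θ ∧ θ =ᶠ[𝓝 x₀] id ∧ (∀ x, |deriv θ x| ≤ 1) ∧
      ∀ x, |θ x - x₀| ≤ ε := by
  let χ : ContDiffBump x₀ := ⟨ε / 4, ε / 2, by positivity, by linarith⟩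
  let θ : ℝ → ℝ := fun x => x₀ + ∫ t in x₀..x, χ t
  have hθ (x : ℝ) : HasDerivAt θ (χ x) x :=
    (χ.continuous.integral_hasStrictDerivAt x₀ x).hasDerivAt.const_add x₀
  have hderiv : deriv θ = χ := funext fun x => (hθ x).deriv
  refine ⟨θ, ?_, ?_, fun x => ?_, fun x => ?_⟩
  · exact contDiff_infty_iff_deriv.2 ⟨fun x => (hθ x).differentiableAt, hderiv ▸ χ.contDiff⟩
  · filter_upwards [Metric.closedBall_mem_nhds x₀ χ.rIn_pos] with x hx
    have hone : ∀ t ∈ uIcc x₀ x, χ t = 1 := fun t ht =>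
      χ.one_of_mem_closedBall
        ((convex_closedBall x₀ χ.rIn).ordConnected.uIcc_subset
          (Metric.mem_closedBall_self χ.rIn_pos.le) hx ht)
    simp [θ, intervalIntegral.integral_congr hone]
  · rw [hderiv, abs_of_nonneg χ.nonneg]
    exact χ.le_one
  · calc |θ x - x₀| = ‖∫ t in x₀..x, χ t‖ := by simp [θ]
      _ ≤ ∫ t in uIoc x₀ x, ‖χ t‖ := intervalIntegral.norm_integral_le_integral_norm_uIoc
      _ = ∫ t in uIoc x₀ x, χ t := by simp only [Real.norm_of_nonneg χ.nonneg]
      _ ≤ ∫ t, χ t :=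
        MeasureTheory.setIntegral_le_integral χ.integrable (.of_forall fun _ => χ.nonneg)
      _ ≤ MeasureTheory.volume.real (Metric.closedBall x₀ (ε / 2)) :=
        χ.integral_le_measure_closedBall _
      _ = ε := by rw [Real.volume_real_closedBall (by positivity)]; ring

-- Composing with a smooth `θ` that is the identity near `x₀`, has `|θ'| ≤ 1` and stays near `x₀`
-- turns the inequality at `x₀` into a global one.
lemma exists_contDiff_abs_deriv_lt_eventuallyEq {g : ℝ → ℝ} (hg : ContDiff ℝ ∞ g) {x₀ : ℝ}
    (hx₀ : |deriv g x₀| < g x₀) :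
    ∃ u : ℝ → ℝ, ContDiff ℝ ∞ u ∧ (∀ x, |deriv u x| < u x) ∧ u =ᶠ[𝓝 x₀] g := by
  have hnhds : ∀ᶠ y in 𝓝 x₀, |deriv g y| < g y :=
    (hg.continuous_deriv (by simp)).abs.continuousAt.eventually_lt hg.continuous.continuousAt hx₀
  obtain ⟨ε, hε, hball⟩ := Metric.nhds_basis_closedBall.eventually_iff.1 hnhds
  obtain ⟨θ, hθ, hid, hθ', hθε⟩ := exists_contDiff_eventuallyEq_id_abs_deriv_le_one x₀ hε
  refine ⟨g ∘ θ, hg.comp hθ, fun x => ?_, hid.fun_comp g⟩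
  calc |deriv (g ∘ θ) x| = |deriv g (θ x)| * |deriv θ x| := by
        rw [deriv_comp x (hg.differentiable (by simp) _) (hθ.differentiable (by simp) x), abs_mul]
    _ ≤ |deriv g (θ x)| := mul_le_of_le_one_right (abs_nonneg _) (hθ' x)
    _ < g (θ x) := hball (hθε x)

lemma exists_contDiff_abs_deriv_lt_deriv_iterate_eq {f : ℕ → ℝ} (hf : |f 1| < f 0) {N : ℕ}
    (hN : 2 ≤ N) (x₀ : ℝ) :
    ∃ u : ℝ → ℝ, ContDiff ℝ ∞ u ∧ (∀ x, |deriv u x| < u x) ∧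
      ∀ i < N, deriv^[i] u x₀ = f i := by
  obtain ⟨p, hp⟩ := exists_polynomial_deriv_iterate_eq f N x₀
  have hx₀ : |deriv (fun x => p.eval x) x₀| < p.eval x₀ := by
    have h0 : p.eval x₀ = f 0 := hp 0 (by lia)
    have h1 : deriv (fun x => p.eval x) x₀ = f 1 := hp 1 (by lia)
    rwa [h0, h1]
  obtain ⟨u, hu, hu', hgerm⟩ := exists_contDiff_abs_deriv_lt_eventuallyEq
    (p.contDiff_aeval ∞) hx₀
  refine ⟨u, hu, hu', fun i hi => ?_⟩
  rw [← hp i hi, ← iteratedDeriv_eq_iterate, ← iteratedDeriv_eq_iterate]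
  exact hgerm.iteratedDeriv_eq i

/-! ### Boosts of the cone -/

lemma clm_apply_eq_fst_mul_add_snd_mul (L : ℝ × ℝ →L[ℝ] ℝ) (v : ℝ × ℝ) :
    L v = v.1 * L (1, 0) + v.2 * L (0, 1) := by
  rw [← smul_eq_mul, ← smul_eq_mul, ← map_smul, ← map_smul, ← map_add]
  simp

/-- The open cone `D = {(a, b) : a > |b|}` in which the pairs `(u x, u' x)` take their values. -/
def forwardCone : Set (ℝ × ℝ) := {p | |p.2| < p.1}

lemma isOpen_forwardCone : IsOpen forwardCone := isOpen_lt (by fun_prop) (by fun_prop)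

lemma convex_forwardCone : Convex ℝ forwardCone := by
  simpa [forwardCone, ← Real.norm_eq_abs] using
    ((convexOn_norm convex_univ).comp_linearMap (LinearMap.snd ℝ ℝ ℝ)).sub
      ((LinearMap.fst ℝ ℝ ℝ).concaveOn convex_univ) |>.convex_lt 0

lemma fst_pos_of_mem_forwardCone {p : ℝ × ℝ} (hp : p ∈ forwardCone) : 0 < p.1 :=
  (abs_nonneg p.2).trans_lt hp

lemma sq_sub_sq_pos_of_mem_forwardCone {p : ℝ × ℝ} (hp : p ∈ forwardCone) :
    0 < p.1 ^ 2 - p.2 ^ 2 :=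
  sub_pos.2 (sq_lt_sq.2 (lt_of_lt_of_le hp (le_abs_self p.1)))

lemma mk_sqrt_add_sq_mem_forwardCone {s : ℝ} (hs : 0 < s) (y : ℝ) :
    (√(s + y ^ 2), y) ∈ forwardCone :=
  (Real.lt_sqrt (abs_nonneg y)).2 (by rw [sq_abs]; linarith)

lemma eq_mk_sqrt_of_mem_forwardCone {p : ℝ × ℝ} (hp : p ∈ forwardCone) :
    p = (√(p.1 ^ 2 - p.2 ^ 2 + p.2 ^ 2), p.2) := by
  rw [sub_add_cancel, Real.sqrt_sq (fst_pos_of_mem_forwardCone hp).le]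

/-- The derivative `b f_a + a f_b` of `f` along the generator of the Lorentz boosts of the
`(a, b)`-plane, which preserve `a² - b²`. -/
def boostDeriv (f : ℝ × ℝ → ℝ) (p : ℝ × ℝ) : ℝ := fderiv ℝ f p p.swap

/-- The divergence of the vector field `(f, boostDeriv f)`. -/
def boostDivergence (f : ℝ × ℝ → ℝ) (p : ℝ × ℝ) : ℝ :=
  fderiv ℝ f p (1, 0) + fderiv ℝ (boostDeriv f) p (0, 1)

/-- The Minkowski pairing `a f - b (boostDeriv f)` of the point `(a, b)` with the vector field
`(f, boostDeriv f)`. -/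
def boostMoment (f : ℝ × ℝ → ℝ) (p : ℝ × ℝ) : ℝ := p.1 * f p - p.2 * boostDeriv f p

lemma contDiffOn_boostDeriv {f : ℝ × ℝ → ℝ} {U : Set (ℝ × ℝ)} (hU : IsOpen U)
    {m n : WithTop ℕ∞} (hf : ContDiffOn ℝ n f U) (hmn : m + 1 ≤ n) :
    ContDiffOn ℝ m (boostDeriv f) U :=
  (hf.fderiv_of_isOpen hU hmn).clm_apply (contDiff_snd.prodMk contDiff_fst).contDiffOn

lemma boostDeriv_congr {f g : ℝ × ℝ → ℝ} {U : Set (ℝ × ℝ)} (hU : IsOpen U) (hfg : EqOn f g U) :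
    EqOn (boostDeriv f) (boostDeriv g) U := fun p hp => by
  rw [boostDeriv, (hfg.eventuallyEq_of_mem (hU.mem_nhds hp)).fderiv_eq, boostDeriv]

lemma fderiv_boostMoment {f : ℝ × ℝ → ℝ} {p : ℝ × ℝ} (hf : DifferentiableAt ℝ f p)
    (hf' : DifferentiableAt ℝ (boostDeriv f) p) (v : ℝ × ℝ) :
    fderiv ℝ (boostMoment f) p v =
      (v.1 * p.1 - v.2 * p.2) * boostDivergence f p
        + v.1 * (f p - boostDeriv (boostDeriv f) p) := by
  have hmoment := ((hasFDerivAt_fst (𝕜 := ℝ) (p := p)).mul hf.hasFDerivAt).sub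
    ((hasFDerivAt_snd (𝕜 := ℝ) (p := p)).mul hf'.hasFDerivAt)
  have hboost : boostDeriv f p = p.2 * fderiv ℝ f p (1, 0) + p.1 * fderiv ℝ f p (0, 1) :=
    clm_apply_eq_fst_mul_add_snd_mul _ _
  have hboost' : boostDeriv (boostDeriv f) p =
      p.2 * fderiv ℝ (boostDeriv f) p (1, 0) + p.1 * fderiv ℝ (boostDeriv f) p (0, 1) :=
    clm_apply_eq_fst_mul_add_snd_mul _ _
  have hv := clm_apply_eq_fst_mul_add_snd_mul (fderiv ℝ f p) v
  have hv' := clm_apply_eq_fst_mul_add_snd_mul (fderiv ℝ (boostDeriv f) p) v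
  refine (congrArg (· v) hmoment.fderiv).trans ?_
  simp only [sub_apply, add_apply, smul_apply, ContinuousLinearMap.coe_fst',
    ContinuousLinearMap.coe_snd', smul_eq_mul, boostDivergence]
  linear_combination p.1 * hv - p.2 * hv' - v.2 * hboost + v.1 * hboost'

lemma hasDerivAt_mk_sqrt_add_sq {s : ℝ} (hs : 0 < s) (y : ℝ) :
    HasDerivAt (fun y => (√(s + y ^ 2), y)) ((√(s + y ^ 2))⁻¹ • (y, √(s + y ^ 2))) y := by
  have hsqrt : 0 < √(s + y ^ 2) := by positivity
  refine ((((hasDerivAt_pow 2 y).const_add s).sqrt (by positivity)).prodMk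
    (hasDerivAt_id y)).congr_deriv (Prod.ext ?_ ?_)
  · simp only [Prod.smul_fst, smul_eq_mul]
    push_cast
    field_simp
  · simp [hsqrt.ne']

-- The level sets of `a² - b²` in the cone are the curves `y ↦ (√(s + y²), y)`, whose velocity is
-- proportional to the boost generator.
lemma eq_of_boostDeriv_eq_zero {f : ℝ × ℝ → ℝ} (hf : DifferentiableOn ℝ f forwardCone)
    (hboost : ∀ p ∈ forwardCone, boostDeriv f p = 0) {p q : ℝ × ℝ} (hp : p ∈ forwardCone)
    (hq : q ∈ forwardCone) (hpq : p.1 ^ 2 - p.2 ^ 2 = q.1 ^ 2 - q.2 ^ 2) : f p = f q := by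
  set s := q.1 ^ 2 - q.2 ^ 2 with hs
  have hs₀ : 0 < s := sq_sub_sq_pos_of_mem_forwardCone hq
  have hconst (y : ℝ) : HasDerivAt (fun y => f (√(s + y ^ 2), y)) 0 y := by
    have hmem := mk_sqrt_add_sq_mem_forwardCone hs₀ y
    have hcomp := (hf.differentiableAt (isOpen_forwardCone.mem_nhds hmem)).hasFDerivAt
      |>.comp_hasDerivAt_of_eq y (hasDerivAt_mk_sqrt_add_sq hs₀ y) rfl
    refine hcomp.congr_deriv ?_
    rw [map_smul]
    exact smul_eq_zero_of_right _ (hboost _ hmem)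
  rw [eq_mk_sqrt_of_mem_forwardCone hp, eq_mk_sqrt_of_mem_forwardCone hq, hpq, ← hs]
  exact is_const_of_deriv_eq_zero (fun y => (hconst y).differentiableAt)
    (fun y => (hconst y).deriv) p.2 q.2

lemma differentiableOn_of_eq_comp_sq_sub_sq {f : ℝ × ℝ → ℝ} {φ ψ : ℝ → ℝ}
    (hφ : DifferentiableOn ℝ φ (Ioi 0)) (hψ : DifferentiableOn ℝ ψ (Ioi 0))
    (hf : ∀ p ∈ forwardCone, f p = p.2 * φ (p.1 ^ 2 - p.2 ^ 2) + p.1 * ψ (p.1 ^ 2 - p.2 ^ 2)) :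
    DifferentiableOn ℝ f forwardCone := by
  have hcomp {χ : ℝ → ℝ} (hχ : DifferentiableOn ℝ χ (Ioi 0)) :
      DifferentiableOn ℝ (fun p : ℝ × ℝ => χ (p.1 ^ 2 - p.2 ^ 2)) forwardCone :=
    hχ.fun_comp (by fun_prop) fun _ => sq_sub_sq_pos_of_mem_forwardCone
  exact ((differentiableOn_snd.mul (hcomp hφ)).add (differentiableOn_fst.mul (hcomp hψ))).congr hf

lemma boostDeriv_eq_of_eq_comp_sq_sub_sq {f : ℝ × ℝ → ℝ} {φ ψ : ℝ → ℝ}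
    (hφ : DifferentiableOn ℝ φ (Ioi 0)) (hψ : DifferentiableOn ℝ ψ (Ioi 0))
    (hf : ∀ p ∈ forwardCone, f p = p.2 * φ (p.1 ^ 2 - p.2 ^ 2) + p.1 * ψ (p.1 ^ 2 - p.2 ^ 2)) :
    ∀ p ∈ forwardCone,
      boostDeriv f p = p.2 * ψ (p.1 ^ 2 - p.2 ^ 2) + p.1 * φ (p.1 ^ 2 - p.2 ^ 2) := by
  intro p hp
  have hfst : HasFDerivAt Prod.fst (ContinuousLinearMap.fst ℝ ℝ ℝ) p := hasFDerivAt_fst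
  have hsnd : HasFDerivAt Prod.snd (ContinuousLinearMap.snd ℝ ℝ ℝ) p := hasFDerivAt_snd
  have hcomp {χ : ℝ → ℝ} (hχ : DifferentiableOn ℝ χ (Ioi 0)) :=
    (hχ.differentiableAt
      (Ioi_mem_nhds (sq_sub_sq_pos_of_mem_forwardCone hp))).hasDerivAt.comp_hasFDerivAt p
      ((hfst.pow 2).sub (hsnd.pow 2))
  have hderiv := (hsnd.mul (hcomp hφ)).add (hfst.mul (hcomp hψ))
  rw [boostDeriv_congr isOpen_forwardCone hf hp]
  refine (congrArg (· p.swap) hderiv.fderiv).trans ?_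
  simp only [Nat.add_one_sub_one, pow_one, nsmul_eq_mul, Nat.cast_ofNat, comp_apply, Pi.sub_apply,
    add_apply, smul_apply, sub_apply, ContinuousLinearMap.coe_fst', Prod.fst_swap, smul_eq_mul,
    ContinuousLinearMap.coe_snd', Prod.snd_swap]
  ring

lemma differentiableOn_boostMoment {f : ℝ × ℝ → ℝ} {U : Set (ℝ × ℝ)}
    (hf : DifferentiableOn ℝ f U) (hf' : DifferentiableOn ℝ (boostDeriv f) U) :
    DifferentiableOn ℝ (boostMoment f) U :=
  (differentiableOn_fst.mul hf).sub (differentiableOn_snd.mul hf')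

lemma exists_boostMoment_eq_const {f : ℝ × ℝ → ℝ} (hf : DifferentiableOn ℝ f forwardCone)
    (hf' : DifferentiableOn ℝ (boostDeriv f) forwardCone)
    (hboost : ∀ p ∈ forwardCone, boostDeriv (boostDeriv f) p = f p)
    (hdiv : ∀ p ∈ forwardCone, boostDivergence f p = 0) :
    ∃ k₀, ∀ p ∈ forwardCone, boostMoment f p = k₀ := by
  refine isOpen_forwardCone.exists_is_const_of_fderiv_eq_zero (𝕜 := ℝ)
    convex_forwardCone.isPreconnected (differentiableOn_boostMoment hf hf') fun p hp => ?_
  have hnhds := isOpen_forwardCone.mem_nhds hp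
  refine ContinuousLinearMap.ext fun v => ?_
  rw [fderiv_boostMoment (hf.differentiableAt hnhds) (hf'.differentiableAt hnhds), hdiv p hp,
    hboost p hp]
  simp

lemma boostMoment_boostDeriv_eq {f : ℝ × ℝ → ℝ} (hf : DifferentiableOn ℝ f forwardCone)
    (hf' : DifferentiableOn ℝ (boostDeriv f) forwardCone)
    (hboost : ∀ p ∈ forwardCone, boostDeriv (boostDeriv f) p = f p) {p q : ℝ × ℝ}
    (hp : p ∈ forwardCone) (hq : q ∈ forwardCone)
    (hpq : p.1 ^ 2 - p.2 ^ 2 = q.1 ^ 2 - q.2 ^ 2) :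
    boostMoment (boostDeriv f) p = boostMoment (boostDeriv f) q := by
  have hf'' : DifferentiableOn ℝ (boostDeriv (boostDeriv f)) forwardCone := hf.congr hboost
  refine eq_of_boostDeriv_eq_zero (differentiableOn_boostMoment hf' hf'') (fun r hr => ?_)
    hp hq hpq
  have hnhds := isOpen_forwardCone.mem_nhds hr
  rw [boostDeriv, fderiv_boostMoment (hf'.differentiableAt hnhds) (hf''.differentiableAt hnhds),
    boostDeriv_congr isOpen_forwardCone hboost hr, Prod.fst_swap, Prod.snd_swap]
  ring

lemma sq_sub_sq_mul_eq_boostMoment {f : ℝ × ℝ → ℝ} {p : ℝ × ℝ}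
    (hboost : boostDeriv (boostDeriv f) p = f p) :
    (p.1 ^ 2 - p.2 ^ 2) * f p = p.1 * boostMoment f p + p.2 * boostMoment (boostDeriv f) p := by
  rw [boostMoment, boostMoment, hboost]
  ring

lemma exists_eq_of_boost_equations {f : ℝ × ℝ → ℝ} {n : WithTop ℕ∞} (hn : 2 ≤ n)
    (hf : ContDiffOn ℝ n f forwardCone)
    (hboost : ∀ p ∈ forwardCone, boostDeriv (boostDeriv f) p = f p)
    (hdiv : ∀ p ∈ forwardCone, boostDivergence f p = 0) :
    ∃ k₁ : ℝ → ℝ, ContDiffOn ℝ n k₁ (Ioi 0) ∧ ∃ k₀ : ℝ, ∀ p ∈ forwardCone,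
      f p = p.2 * k₁ (p.1 ^ 2 - p.2 ^ 2) + k₀ * p.1 / (p.1 ^ 2 - p.2 ^ 2) := by
  have hf₁ : DifferentiableOn ℝ f forwardCone :=
    hf.differentiableOn (zero_lt_two.trans_le hn).ne'
  have hf' : DifferentiableOn ℝ (boostDeriv f) forwardCone :=
    (contDiffOn_boostDeriv (m := 1) isOpen_forwardCone hf
      (one_add_one_eq_two.trans_le hn)).differentiableOn one_ne_zero
  obtain ⟨k₀, hk₀⟩ := exists_boostMoment_eq_const hf₁ hf' hboost hdiv
  -- The claimed identity for `f`, solved for `k₁` at `b = 1`.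
  refine ⟨fun s => f (√(s + 1), 1) - k₀ * √(s + 1) / s, ?_, k₀, fun p hp => ?_⟩
  · have hsqrt : ContDiffOn ℝ n (fun s => √(s + 1)) (Ioi 0) :=
      (contDiffOn_id.add contDiffOn_const).sqrt fun s (hs : 0 < s) => (add_pos hs one_pos).ne'
    exact (hf.comp (hsqrt.prodMk contDiffOn_const)
      fun s hs => by simpa using mk_sqrt_add_sq_mem_forwardCone hs 1).sub
      ((contDiffOn_const.mul hsqrt).div contDiffOn_id fun s hs => ne_of_gt hs)
  · set s := p.1 ^ 2 - p.2 ^ 2 with hs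
    have hs₀ : 0 < s := sq_sub_sq_pos_of_mem_forwardCone hp
    have hq : (√(s + 1), 1) ∈ forwardCone := by
      simpa using mk_sqrt_add_sq_mem_forwardCone hs₀ 1
    have hqs : √(s + 1) ^ 2 - 1 ^ 2 = s := by
      rw [Real.sq_sqrt (by positivity), one_pow, add_sub_cancel_right]
    have hfp := sq_sub_sq_mul_eq_boostMoment (hboost p hp)
    have hfq := sq_sub_sq_mul_eq_boostMoment (hboost _ hq)
    rw [boostMoment_boostDeriv_eq hf₁ hf' hboost hp hq (hs.symm.trans hqs.symm), hk₀ p hp,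
      ← hs] at hfp
    rw [hk₀ _ hq, hqs] at hfq
    field_simp
    linear_combination hfp - p.2 * hfq

lemma boost_equations_of_eq {f : ℝ × ℝ → ℝ} {k₁ : ℝ → ℝ} {k₀ : ℝ}
    (hk₁ : DifferentiableOn ℝ k₁ (Ioi 0))
    (hf : ∀ p ∈ forwardCone,
      f p = p.2 * k₁ (p.1 ^ 2 - p.2 ^ 2) + k₀ * p.1 / (p.1 ^ 2 - p.2 ^ 2)) :
    ∀ p ∈ forwardCone, boostDeriv (boostDeriv f) p = f p ∧ boostDivergence f p = 0 := by
  have hk₀ : DifferentiableOn ℝ (fun s => k₀ / s) (Ioi 0) :=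
    (differentiableOn_const k₀).div differentiableOn_id fun s hs => ne_of_gt hs
  have hf_eq : ∀ p ∈ forwardCone,
      f p = p.2 * k₁ (p.1 ^ 2 - p.2 ^ 2) + p.1 * (k₀ / (p.1 ^ 2 - p.2 ^ 2)) := fun p hp => by
    rw [hf p hp, mul_comm k₀, mul_div_assoc]
  have hboost_eq := boostDeriv_eq_of_eq_comp_sq_sub_sq hk₁ hk₀ hf_eq
  have hboost (p) (hp : p ∈ forwardCone) : boostDeriv (boostDeriv f) p = f p :=
    (boostDeriv_eq_of_eq_comp_sq_sub_sq hk₀ hk₁ hboost_eq p hp).trans (hf_eq p hp).symm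
  have hmoment : EqOn (boostMoment f) (fun _ => k₀) forwardCone := fun p hp => by
    have := sq_sub_sq_pos_of_mem_forwardCone hp
    rw [boostMoment, hf_eq p hp, hboost_eq p hp]
    field_simp
    ring
  intro p hp
  have hnhds := isOpen_forwardCone.mem_nhds hp
  have hfderiv : fderiv ℝ (boostMoment f) p (1, 0) = 0 := by
    rw [(hmoment.eventuallyEq_of_mem hnhds).fderiv_eq, fderiv_fun_const]
    rfl
  rw [fderiv_boostMoment
    ((differentiableOn_of_eq_comp_sq_sub_sq hk₁ hk₀ hf_eq).differentiableAt hnhds)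
    ((differentiableOn_of_eq_comp_sq_sub_sq hk₀ hk₁ hboost_eq).differentiableAt hnhds),
    hboost p hp] at hfderiv
  exact ⟨hboost p hp, by simpa [(fst_pos_of_mem_forwardCone hp).ne'] using hfderiv⟩

/-! ### Euler expressions -/

/-- The second-order jet `(u x, u' x, u'' x)` at which `eulerExpr k u x` evaluates the partial
derivatives of `k`. -/
def jet (u : ℝ → ℝ) (x : ℝ) : ℝ × ℝ × ℝ := (u x, deriv u x, deriv (deriv u) x)

lemma hasDerivAt_jet {u : ℝ → ℝ} (hu : ContDiff ℝ 3 u) (x : ℝ) :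
    HasDerivAt (jet u) (jet (deriv u) x) x := by
  have hu' : ContDiff ℝ 2 (deriv u) := hu.deriv'
  have hu'' : ContDiff ℝ 1 (deriv (deriv u)) := hu'.deriv'
  exact (hu.differentiable (by simp) x).hasDerivAt.prodMk
    ((hu'.differentiable (by simp) x).hasDerivAt.prodMk
      (hu''.differentiable (by simp) x).hasDerivAt)

lemma deriv_slice_snd {k : ℝ → ℝ → ℝ → ℝ} {a b c : ℝ}
    (hk : DifferentiableAt ℝ ↿k (a, b, c)) :
    deriv (fun s => k a s c) b = fderiv ℝ ↿k (a, b, c) (0, 1, 0) :=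
  (hk.hasFDerivAt.comp_hasDerivAt_of_eq b ((hasDerivAt_const b a).prodMk
    ((hasDerivAt_id b).prodMk (hasDerivAt_const b c))) rfl).deriv

lemma deriv_deriv_slice_snd {k : ℝ → ℝ → ℝ → ℝ} {u : ℝ → ℝ} (hu : ContDiff ℝ 3 u)
    (hk : ∀ y, ContDiffAt ℝ 2 ↿k (jet u y)) (x : ℝ) :
    deriv (fun y => deriv (fun s => k (u y) s (deriv (deriv u) y)) (deriv u y)) x =
      fderiv ℝ (fderiv ℝ ↿k) (jet u x) (jet (deriv u) x) (0, 1, 0) := by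
  have hslice : (fun y => deriv (fun s => k (u y) s (deriv (deriv u) y)) (deriv u y)) =
      fun y => fderiv ℝ ↿k (jet u y) (0, 1, 0) :=
    funext fun y => deriv_slice_snd ((hk y).differentiableAt two_ne_zero)
  rw [hslice]
  simpa using (((differentiableAt_fderiv_of_contDiffAt (hk x)).hasFDerivAt.comp_hasDerivAt x
    (hasDerivAt_jet hu x)).clm_apply (hasDerivAt_const x ((0, 1, 0) : ℝ × ℝ × ℝ))).deriv

lemma deriv_slice_thd {k : ℝ → ℝ → ℝ → ℝ} {a b c : ℝ}
    (hk : DifferentiableAt ℝ ↿k (a, b, c)) :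
    deriv (fun s => k a b s) c = fderiv ℝ ↿k (a, b, c) (0, 0, 1) :=
  (hk.hasFDerivAt.comp_hasDerivAt_of_eq c ((hasDerivAt_const c a).prodMk
    ((hasDerivAt_const c b).prodMk (hasDerivAt_id c))) rfl).deriv

lemma eulerExpr_sub_eulerExpr {k : ℝ → ℝ → ℝ → ℝ} {Ω : Set (ℝ × ℝ × ℝ)}
    (hk : ∀ p ∈ Ω, ContDiffAt ℝ 2 ↿k p)
    (hk' : ∀ p ∈ Ω, ContDiffAt ℝ 2 (fun q : ℝ × ℝ × ℝ => deriv (k q.1 q.2.1) q.2.2) p)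
    {u v : ℝ → ℝ} (hu : ContDiff ℝ 4 u) (hv : ContDiff ℝ 4 v) (humem : ∀ y, jet u y ∈ Ω)
    (hvmem : ∀ y, jet v y ∈ Ω) {x : ℝ} (hjet : jet u x = jet v x)
    (hjet' : jet (deriv u) x = jet (deriv v) x) :
    eulerExpr k u x - eulerExpr k v x =
      deriv (deriv (k (u x) (deriv u x))) (deriv (deriv u) x) *
        (deriv^[4] u x - deriv^[4] v x) := by
  let G : ℝ × ℝ × ℝ → ℝ := fun p => deriv (k p.1 p.2.1) p.2.2
  have hG {w : ℝ → ℝ} (hw : ContDiff ℝ 4 w) (hwmem : ∀ y, jet w y ∈ Ω) :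
      deriv (deriv fun y => deriv (k (w y) (deriv w y)) (deriv (deriv w) y)) x =
        fderiv ℝ (fderiv ℝ G) (jet w x) (jet (deriv w) x) (jet (deriv w) x) +
          fderiv ℝ G (jet w x) (jet (deriv (deriv w)) x) :=
    deriv_deriv_comp (fun y => hk' _ (hwmem y)) (hasDerivAt_jet (hw.of_le (by norm_num)))
      (hasDerivAt_jet hw.deriv' x)
  have hkb {w : ℝ → ℝ} (hw : ContDiff ℝ 4 w) (hwmem : ∀ y, jet w y ∈ Ω) :=
    deriv_deriv_slice_snd (hw.of_le (by norm_num)) (fun y => hk _ (hwmem y)) x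
  have hka : deriv (fun s => k s (deriv u x) (deriv (deriv u) x)) (u x) =
      deriv (fun s => k s (deriv v x) (deriv (deriv v) x)) (v x) := by
    simp only [jet, Prod.mk.injEq] at hjet
    rw [hjet.1, hjet.2.1, hjet.2.2]
  have htop : jet (deriv (deriv u)) x - jet (deriv (deriv v)) x =
      (deriv^[4] u x - deriv^[4] v x) • ((0, 0, 1) : ℝ × ℝ × ℝ) := by
    simp only [jet, Prod.mk.injEq] at hjet hjet' ⊢
    simp [hjet, hjet']
  have hkcc : deriv (deriv (k (u x) (deriv u x))) (deriv (deriv u) x) =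
      fderiv ℝ G (jet u x) (0, 0, 1) :=
    deriv_slice_thd (k := fun a b c => deriv (k a b) c)
      ((hk' _ (humem x)).differentiableAt two_ne_zero)
  rw [eulerExpr, eulerExpr, hkb hu humem, hkb hv hvmem, hG hu humem, hG hv hvmem, hka, hkcc,
    ← hjet, ← hjet']
  have hmap := (fderiv ℝ G (jet u x)).map_sub (jet (deriv (deriv u)) x) (jet (deriv (deriv v)) x)
  rw [htop, map_smul, smul_eq_mul] at hmap
  linear_combination -hmap

lemma exists_contDiff_abs_deriv_lt_jet_eq {a b : ℝ} (hab : |b| < a) (c d e : ℝ) :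
    ∃ u : ℝ → ℝ, ContDiff ℝ ∞ u ∧ (∀ x, |deriv u x| < u x) ∧ jet u 0 = (a, b, c) ∧
      jet (deriv u) 0 = (b, c, d) ∧ deriv^[4] u 0 = e := by
  obtain ⟨u, hu, hu', hjet⟩ := exists_contDiff_abs_deriv_lt_deriv_iterate_eq (N := 5)
    (f := fun | 0 => a | 1 => b | 2 => c | 3 => d | _ => e) hab (by norm_num) 0
  have h₀ : u 0 = a := hjet 0 (by norm_num)
  have h₁ : deriv u 0 = b := hjet 1 (by norm_num)
  have h₂ : deriv (deriv u) 0 = c := hjet 2 (by norm_num)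
  have h₃ : deriv (deriv (deriv u)) 0 = d := hjet 3 (by norm_num)
  exact ⟨u, hu, hu', by rw [jet, h₀, h₁, h₂], by rw [jet, h₁, h₂, h₃], hjet 4 (by norm_num)⟩

/-- The second-order jets `(a, b, c)` lying over the cone: those with `a > |b|`. -/
def jetCone : Set (ℝ × ℝ × ℝ) := {p | (p.1, p.2.1) ∈ forwardCone}

lemma isOpen_jetCone : IsOpen jetCone := isOpen_forwardCone.preimage (by fun_prop)

lemma deriv_deriv_eq_zero_of_eulerExpr_eq_zero {k : ℝ → ℝ → ℝ → ℝ}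
    (hk : ContDiffOn ℝ 2 ↿k jetCone)
    (hk' : ContDiffOn ℝ 2 (fun p : ℝ × ℝ × ℝ => deriv (k p.1 p.2.1) p.2.2) jetCone)
    (hE : ∀ u : ℝ → ℝ, ContDiff ℝ ∞ u → (∀ x, |deriv u x| < u x) → ∀ x, eulerExpr k u x = 0)
    {a b : ℝ} (hab : |b| < a) (c : ℝ) : deriv (deriv (k a b)) c = 0 := by
  obtain ⟨u, hu, hu', hujet, hujet', hu₄⟩ := exists_contDiff_abs_deriv_lt_jet_eq hab c 0 1
  obtain ⟨v, hv, hv', hvjet, hvjet', hv₄⟩ := exists_contDiff_abs_deriv_lt_jet_eq hab c 0 0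
  have hsub := eulerExpr_sub_eulerExpr
    (fun p hp => hk.contDiffAt (isOpen_jetCone.mem_nhds hp))
    (fun p hp => hk'.contDiffAt (isOpen_jetCone.mem_nhds hp)) (contDiff_infty.1 hu 4)
    (contDiff_infty.1 hv 4) hu' hv' (hujet.trans hvjet.symm) (hujet'.trans hvjet'.symm)
  rw [hE u hu hu', hE v hv hv', hu₄, hv₄] at hsub
  simp only [jet, Prod.mk.injEq] at hujet
  rw [hujet.1, hujet.2.1, hujet.2.2] at hsub
  simpa using hsub.symm

lemma hasDerivAt_cubic_sub (h₁ h₂ h₃ a c : ℝ) :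
    HasDerivAt (fun s => h₁ * (a - s) + h₂ * (a - s) ^ 2 + h₃ * (a - s) ^ 3)
      (-(h₁ + 2 * h₂ * (a - c) + 3 * h₃ * (a - c) ^ 2)) c := by
  have hsub : HasDerivAt (fun s => a - s) (-1) c := (hasDerivAt_id c).const_sub a
  refine (((hsub.const_mul h₁).add ((hsub.pow 2).const_mul h₂)).add
    ((hsub.pow 3).const_mul h₃)).congr_deriv ?_
  push_cast
  ring

lemma deriv_deriv_cubic_sub (h₁ h₂ h₃ a c : ℝ) :
    deriv (deriv fun s => h₁ * (a - s) + h₂ * (a - s) ^ 2 + h₃ * (a - s) ^ 3) c =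
      2 * h₂ + 6 * h₃ * (a - c) := by
  rw [funext fun s => (hasDerivAt_cubic_sub h₁ h₂ h₃ a s).deriv]
  have hsub : HasDerivAt (fun s => a - s) (-1) c := (hasDerivAt_id c).const_sub a
  refine ((((hsub.const_mul (2 * h₂)).const_add h₁).add
    ((hsub.pow 2).const_mul (3 * h₃))).neg.congr_deriv ?_).deriv
  push_cast
  ring

lemma eq_zero_of_eulerExpr_eq_zero {h₁ h₂ h₃ : ℝ × ℝ → ℝ} (hh₁ : ContDiffOn ℝ 2 h₁ forwardCone)
    (hh₂ : ContDiffOn ℝ 2 h₂ forwardCone) (hh₃ : ContDiffOn ℝ 2 h₃ forwardCone)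
    {k : ℝ → ℝ → ℝ → ℝ}
    (hk : ∀ p ∈ forwardCone, ∀ c, k p.1 p.2 c =
      h₁ p * (p.1 - c) + h₂ p * (p.1 - c) ^ 2 + h₃ p * (p.1 - c) ^ 3)
    (hE : ∀ u : ℝ → ℝ, ContDiff ℝ ∞ u → (∀ x, |deriv u x| < u x) → ∀ x, eulerExpr k u x = 0) :
    ∀ p ∈ forwardCone, h₂ p = 0 ∧ h₃ p = 0 := by
  have hlift {h : ℝ × ℝ → ℝ} (hh : ContDiffOn ℝ 2 h forwardCone) :
      ContDiffOn ℝ 2 (fun q : ℝ × ℝ × ℝ => h (q.1, q.2.1)) jetCone :=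
    hh.comp (by fun_prop) fun _ hq => hq
  have hm : ContDiffOn ℝ 2 (fun q : ℝ × ℝ × ℝ => q.1 - q.2.2) jetCone := by fun_prop
  have hk_smooth : ContDiffOn ℝ 2 ↿k jetCone :=
    ((((hlift hh₁).mul hm).add ((hlift hh₂).mul (hm.pow 2))).add
      ((hlift hh₃).mul (hm.pow 3))).congr fun q hq => hk _ hq q.2.2
  have hk_slice {p : ℝ × ℝ} (hp : p ∈ forwardCone) : k p.1 p.2 =
      fun c => h₁ p * (p.1 - c) + h₂ p * (p.1 - c) ^ 2 + h₃ p * (p.1 - c) ^ 3 :=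
    funext (hk p hp)
  have hk'_smooth :
      ContDiffOn ℝ 2 (fun q : ℝ × ℝ × ℝ => deriv (k q.1 q.2.1) q.2.2) jetCone := by
    refine (((hlift hh₁).add (((contDiffOn_const (c := 2)).mul (hlift hh₂)).mul hm)).add
      (((contDiffOn_const (c := 3)).mul (hlift hh₃)).mul (hm.pow 2))).neg.congr fun q hq => ?_
    rw [hk_slice (p := (q.1, q.2.1)) hq]
    exact (hasDerivAt_cubic_sub _ _ _ _ _).deriv
  intro p hp
  have hcc (c : ℝ) : 2 * h₂ p + 6 * h₃ p * (p.1 - c) = 0 := by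
    rw [← deriv_deriv_cubic_sub (h₁ p), ← hk_slice hp]
    exact deriv_deriv_eq_zero_of_eulerExpr_eq_zero hk_smooth hk'_smooth hE hp c
  have h₀ := hcc p.1
  have h₁ := hcc (p.1 - 1)
  exact ⟨by linarith, by linarith⟩

lemma deriv_mul_sub_fst {f : ℝ × ℝ → ℝ} {U : Set (ℝ × ℝ)} (hU : IsOpen U)
    {k : ℝ → ℝ → ℝ → ℝ} (hk : ∀ p ∈ U, ∀ c, k p.1 p.2 c = f p * (p.1 - c)) {p : ℝ × ℝ}
    (hp : p ∈ U) (hf : DifferentiableAt ℝ f p) (c : ℝ) :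
    deriv (fun s => k s p.2 c) p.1 = (p.1 - c) * fderiv ℝ f p (1, 0) + f p := by
  have hline : HasDerivAt (fun s => (s, p.2)) ((1 : ℝ), (0 : ℝ)) p.1 :=
    (hasDerivAt_id p.1).prodMk (hasDerivAt_const p.1 p.2)
  have hk_eq : (fun s => k s p.2 c) =ᶠ[𝓝 p.1] fun s => f (s, p.2) * (s - c) :=
    (hline.continuousAt.eventually (hU.mem_nhds hp)).mono fun s hs => hk _ hs c
  rw [hk_eq.deriv_eq, mul_comm]
  exact (((hf.hasFDerivAt.comp_hasDerivAt_of_eq p.1 hline rfl).mul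
    ((hasDerivAt_id p.1).sub_const c)).congr_deriv (by simp)).deriv

lemma deriv_mul_sub_snd {f : ℝ × ℝ → ℝ} {U : Set (ℝ × ℝ)} (hU : IsOpen U)
    {k : ℝ → ℝ → ℝ → ℝ} (hk : ∀ p ∈ U, ∀ c, k p.1 p.2 c = f p * (p.1 - c)) {p : ℝ × ℝ}
    (hp : p ∈ U) (hf : DifferentiableAt ℝ f p) (c : ℝ) :
    deriv (fun s => k p.1 s c) p.2 = (p.1 - c) * fderiv ℝ f p (0, 1) := by
  have hline : HasDerivAt (fun s => (p.1, s)) ((0 : ℝ), (1 : ℝ)) p.2 :=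
    (hasDerivAt_const p.2 p.1).prodMk (hasDerivAt_id p.2)
  have hk_eq : (fun s => k p.1 s c) =ᶠ[𝓝 p.2] fun s => f (p.1, s) * (p.1 - c) :=
    (hline.continuousAt.eventually (hU.mem_nhds hp)).mono fun s hs => hk _ hs c
  rw [hk_eq.deriv_eq, mul_comm]
  exact ((hf.hasFDerivAt.comp_hasDerivAt_of_eq p.2 hline rfl).mul_const _).deriv

lemma hasDerivAt_comp_mk_deriv {g : ℝ × ℝ → ℝ} {u : ℝ → ℝ} {y : ℝ}
    (hg : DifferentiableAt ℝ g (u y, deriv u y)) (hu : DifferentiableAt ℝ u y)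
    (hu' : DifferentiableAt ℝ (deriv u) y) :
    HasDerivAt (fun y => g (u y, deriv u y)) (boostDeriv g (u y, deriv u y) -
      (u y - deriv (deriv u) y) * fderiv ℝ g (u y, deriv u y) (0, 1)) y := by
  have hvelocity : (deriv u y, deriv (deriv u) y) =
      (u y, deriv u y).swap - (u y - deriv (deriv u) y) • ((0, 1) : ℝ × ℝ) := by simp
  refine (hg.hasFDerivAt.comp_hasDerivAt y (hu.hasDerivAt.prodMk hu'.hasDerivAt)).congr_deriv ?_
  rw [hvelocity, map_sub, map_smul, boostDeriv, smul_eq_mul]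

-- Along a curve `(u, u')` the `x`-derivative of `f` differs from `boostDeriv f` by `m f_b`, which
-- cancels the term `-∂k/∂b` under the outer `x`-derivative.
lemma eulerExpr_mul_sub {f : ℝ × ℝ → ℝ} {U : Set (ℝ × ℝ)} (hU : IsOpen U)
    (hf : ContDiffOn ℝ 2 f U) {k : ℝ → ℝ → ℝ → ℝ}
    (hk : ∀ p ∈ U, ∀ c, k p.1 p.2 c = f p * (p.1 - c)) {u : ℝ → ℝ} (hu : ContDiff ℝ 3 u)
    (hmem : ∀ y, (u y, deriv u y) ∈ U) (x : ℝ) :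
    eulerExpr k u x = f (u x, deriv u x) - boostDeriv (boostDeriv f) (u x, deriv u x) +
      (u x - deriv (deriv u) x) * boostDivergence f (u x, deriv u x) := by
  set γ : ℝ → ℝ × ℝ := fun y => (u y, deriv u y)
  set m : ℝ → ℝ := fun y => u y - deriv (deriv u) y
  have hu₀ : Differentiable ℝ u := hu.differentiable three_ne_zero
  have hu₁ : Differentiable ℝ (deriv u) := hu.deriv'.differentiable two_ne_zero
  have hu₂ : Differentiable ℝ (deriv (deriv u)) := hu.deriv'.deriv'.differentiable one_ne_zero
  have hfat (y) : ContDiffAt ℝ 2 f (γ y) := hf.contDiffAt (hU.mem_nhds (hmem y))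
  have hf' (y) : DifferentiableAt ℝ f (γ y) := (hfat y).differentiableAt two_ne_zero
  have hboost : DifferentiableAt ℝ (boostDeriv f) (γ x) :=
    ((contDiffOn_boostDeriv hU hf one_add_one_eq_two.le).differentiableOn
      one_ne_zero).differentiableAt (hU.mem_nhds (hmem x))
  have hmfb : DifferentiableAt ℝ (fun y => m y * fderiv ℝ f (γ y) (0, 1)) x :=
    ((hu₀ x).sub (hu₂ x)).mul (((differentiableAt_fderiv_of_contDiffAt (hfat x)).comp x
      ((hu₀ x).prodMk (hu₁ x))).clm_apply (differentiableAt_const _))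
  have hkb : (fun y => deriv (fun s => k (u y) s (deriv (deriv u) y)) (deriv u y)) =
      fun y => m y * fderiv ℝ f (γ y) (0, 1) :=
    funext fun y => deriv_mul_sub_snd hU hk (hmem y) (hf' y) _
  have hkc : (fun y => deriv (fun s => k (u y) (deriv u y) s) (deriv (deriv u) y)) =
      fun y => -f (γ y) := funext fun y => by
    rw [funext (hk (γ y) (hmem y))]
    exact (((hasDerivAt_id _).const_sub _).const_mul _ |>.congr_deriv (mul_neg_one _)).deriv
  have hkc' : deriv (fun y => -f (γ y)) =
      fun y => m y * fderiv ℝ f (γ y) (0, 1) - boostDeriv f (γ y) :=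
    funext fun y => (hasDerivAt_comp_mk_deriv (hf' y) (hu₀ y) (hu₁ y)).neg.deriv.trans
      (neg_sub _ _)
  have hboost' := hasDerivAt_comp_mk_deriv hboost (hu₀ x) (hu₁ x)
  rw [eulerExpr, hkb, hkc, hkc', deriv_fun_sub hmfb hboost'.differentiableAt, hboost'.deriv,
    deriv_mul_sub_fst hU hk (hmem x) (hf' x), boostDivergence]
  ring

lemma eulerExpr_eq_zero_iff {f : ℝ × ℝ → ℝ} (hf : ContDiffOn ℝ 2 f forwardCone)
    {k : ℝ → ℝ → ℝ → ℝ} (hk : ∀ p ∈ forwardCone, ∀ c, k p.1 p.2 c = f p * (p.1 - c)) :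
    (∀ u : ℝ → ℝ, ContDiff ℝ ∞ u → (∀ x, |deriv u x| < u x) → ∀ x, eulerExpr k u x = 0) ↔
      ∀ p ∈ forwardCone, boostDeriv (boostDeriv f) p = f p ∧ boostDivergence f p = 0 := by
  have hE {u : ℝ → ℝ} (hu : ContDiff ℝ ∞ u) (hu' : ∀ x, |deriv u x| < u x) :=
    eulerExpr_mul_sub isOpen_forwardCone hf hk (contDiff_infty.1 hu 3) hu'
  constructor
  · intro hzero p hp
    have haffine (c : ℝ) :
        f p - boostDeriv (boostDeriv f) p + (p.1 - c) * boostDivergence f p = 0 := by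
      obtain ⟨u, hu, hu', hjet, -, -⟩ := exists_contDiff_abs_deriv_lt_jet_eq hp c 0 0
      simp only [jet, Prod.mk.injEq] at hjet
      have := hE hu hu' 0
      rwa [hzero u hu hu', hjet.1, hjet.2.1, hjet.2.2, eq_comm] at this
    have h₀ := haffine p.1
    have h₁ := haffine (p.1 - 1)
    exact ⟨by linarith, by linarith⟩
  · intro h u hu hu' x
    rw [hE hu hu', (h _ (hu' x)).1, (h _ (hu' x)).2, mul_zero, add_zero, sub_self]

theorem euler_operator_kernel_classification_general {n : WithTop ℕ∞} (hn : 2 ≤ n)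
    (h1 h2 h3 : ℝ → ℝ → ℝ)
    (hh1 : ContDiffOn ℝ n (uncurry h1) {p : ℝ × ℝ | p.1 > |p.2|})
    (hh2 : ContDiffOn ℝ 2 (uncurry h2) {p : ℝ × ℝ | p.1 > |p.2|})
    (hh3 : ContDiffOn ℝ 2 (uncurry h3) {p : ℝ × ℝ | p.1 > |p.2|})
    (k : ℝ → ℝ → ℝ → ℝ)
    (hk : ∀ a b c : ℝ, a > |b| →
      k a b c = h1 a b * (a - c) + h2 a b * (a - c) ^ 2 + h3 a b * (a - c) ^ 3) :
    (∀ u : ℝ → ℝ, ContDiff ℝ ∞ u → (∀ x : ℝ, u x > |deriv u x|) → ∀ x : ℝ, eulerExpr k u x = 0)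
    ↔
    ((∀ a b : ℝ, a > |b| → h2 a b = 0)
      ∧ (∀ a b : ℝ, a > |b| → h3 a b = 0)
      ∧ ∃ k1 : ℝ → ℝ, ContDiffOn ℝ n k1 (Ioi 0) ∧ ∃ k0 : ℝ,
          ∀ a b : ℝ, a > |b| →
            h1 a b = b * k1 (a ^ 2 - b ^ 2) + k0 * a / (a ^ 2 - b ^ 2)) := by
  have hh1₂ := hh1.of_le hn
  have hk_linear (h2_zero : ∀ a b : ℝ, a > |b| → h2 a b = 0)
      (h3_zero : ∀ a b : ℝ, a > |b| → h3 a b = 0) (p) (hp : p ∈ forwardCone) (c : ℝ) :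
      k p.1 p.2 c = uncurry h1 p * (p.1 - c) := by
    rw [hk _ _ _ hp, h2_zero _ _ hp, h3_zero _ _ hp, zero_mul, zero_mul, add_zero, add_zero]
    rfl
  constructor
  · intro hE
    have hzero := eq_zero_of_eulerExpr_eq_zero hh1₂ hh2 hh3 (fun p hp c => hk _ _ c hp) hE
    have h2_zero (a b : ℝ) (hab : a > |b|) : h2 a b = 0 := (hzero (a, b) hab).1
    have h3_zero (a b : ℝ) (hab : a > |b|) : h3 a b = 0 := (hzero (a, b) hab).2
    have hboost := (eulerExpr_eq_zero_iff hh1₂ (hk_linear h2_zero h3_zero)).1 hE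
    obtain ⟨k1, hk1, k0, heq⟩ := exists_eq_of_boost_equations hn hh1
      (fun p hp => (hboost p hp).1) (fun p hp => (hboost p hp).2)
    exact ⟨h2_zero, h3_zero, k1, hk1, k0, fun a b => heq (a, b)⟩
  · rintro ⟨h2_zero, h3_zero, k1, hk1, k0, heq⟩
    exact (eulerExpr_eq_zero_iff hh1₂ (hk_linear h2_zero h3_zero)).2
      (boost_equations_of_eq (hk1.differentiableOn (zero_lt_two.trans_le hn).ne')
        fun p => heq p.1 p.2)

/-- classification of the kernel of the spatial Euler operator on
expressions `k = h1 m + h2 m² + h3 m³` with `m = a − c`, over the domain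
`D = {(a,b) : a > |b|}`. -/
theorem euler_operator_kernel_classification
    (h1 h2 h3 : ℝ → ℝ → ℝ)
    (hh1 : ContDiffOn ℝ (⊤ : ℕ∞) (Function.uncurry h1) {p : ℝ × ℝ | p.1 > |p.2|})
    (hh2 : ContDiffOn ℝ (⊤ : ℕ∞) (Function.uncurry h2) {p : ℝ × ℝ | p.1 > |p.2|})
    (hh3 : ContDiffOn ℝ (⊤ : ℕ∞) (Function.uncurry h3) {p : ℝ × ℝ | p.1 > |p.2|})
    (k : ℝ → ℝ → ℝ → ℝ)
    (hk : ∀ a b c : ℝ,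
      k a b c = h1 a b * (a - c) + h2 a b * (a - c)^2 + h3 a b * (a - c)^3) :
    (∀ u : ℝ → ℝ, ContDiff ℝ (⊤ : ℕ∞) u → (∀ x : ℝ, u x > |deriv u x|) →
        ∀ x : ℝ, eulerExpr k u x = 0)
    ↔
    ((∀ a b : ℝ, a > |b| → h2 a b = 0)
      ∧ (∀ a b : ℝ, a > |b| → h3 a b = 0)
      ∧ ∃ k1 : ℝ → ℝ, ContDiffOn ℝ (⊤ : ℕ∞) k1 (Set.Ioi 0) ∧ ∃ k0 : ℝ,
          ∀ a b : ℝ, a > |b| →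
            h1 a b = b * k1 (a^2 - b^2) + k0 * a / (a^2 - b^2)) := by
  exact euler_operator_kernel_classification_general ENat.LEInfty.out h1 h2 h3 hh1
    (hh2.of_le ENat.LEInfty.out) (hh3.of_le ENat.LEInfty.out) k fun a b c _ => hk a b c

end
end

section
/- Let k1 : (0,∞) → ℝ be smooth, let K1 : (0,∞) → ℝ be an antiderivative of k1 (K1' = k1), and let k0 ∈ ℝ. Then for every C² function u : ℝ → ℝ with u(x) > |u'(x)| for all x, the identity d/dx[ (1/2) K1( u² − u'² ) + (1/2) k0 log( (u − u')/(u + u') ) + k0 x ] = ( u' · k1( u² − u'² ) + k0 · u/( u² − u'² ) ) · ( u − u'' ) holds at every x ∈ ℝ; that is, any function of the form ( u' k1(u²−u'²) + k0 u/(u²−u'²) )·(u − u'') is a total x-derivative. -/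
open Real

/-!
Since `(u² - u'²)' = 2 u' (u - u'')`, composing an antiderivative of `k1` with `u² - u'²` gives the
`k1` term. The logarithm is `-2 artanh (u' / u)`, so half of it has derivative
`(u'² - u u'') / (u² - u'²)`; adding `1`, the derivative of `x`, turns the numerator into
`u (u - u'')`, which gives the `k0` term.
-/

theorem hasDerivAt_sq_sub_sq_deriv {𝕜 : Type*} [NontriviallyNormedField 𝕜] {u u' : 𝕜 → 𝕜}
    {u'' x : 𝕜} (hu : HasDerivAt u (u' x) x) (hu' : HasDerivAt u' u'' x) :
    HasDerivAt (fun y ↦ u y ^ 2 - u' y ^ 2) (2 * u' x * (u x - u'')) x :=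
  ((hu.fun_pow 2).fun_sub (hu'.fun_pow 2)).congr_deriv (by push_cast; ring)

theorem hasDerivAt_log_sub_div_add {f g : ℝ → ℝ} {f' g' x : ℝ} (hf : HasDerivAt f f' x)
    (hg : HasDerivAt g g' x) (hsub : f x - g x ≠ 0) (hadd : f x + g x ≠ 0) :
    HasDerivAt (fun y ↦ log ((f y - g y) / (f y + g y)))
      (2 * (f' * g x - f x * g') / (f x ^ 2 - g x ^ 2)) x := by
  refine (((hf.fun_sub hg).fun_div (hf.fun_add hg) hadd).log (div_ne_zero hsub hadd)).congr_deriv ?_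
  rw [sq_sub_sq]
  field_simp
  ring

theorem hasDerivAt_half_log_sub_div_add_deriv_add_id {u u' : ℝ → ℝ} {u'' x : ℝ}
    (hu : HasDerivAt u (u' x) x) (hu' : HasDerivAt u' u'' x) (hne : u x ^ 2 - u' x ^ 2 ≠ 0) :
    HasDerivAt (fun y ↦ 1 / 2 * log ((u y - u' y) / (u y + u' y)) + y)
      (u x / (u x ^ 2 - u' x ^ 2) * (u x - u'')) x := by
  obtain ⟨hadd, hsub⟩ : u x + u' x ≠ 0 ∧ u x - u' x ≠ 0 := by
    rwa [sq_sub_sq, mul_ne_zero_iff] at hne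
  refine (((hasDerivAt_log_sub_div_add hu hu' hsub hadd).const_mul (1 / 2)).fun_add
    (hasDerivAt_id' x)).congr_deriv ?_
  field_simp
  ring

theorem total_derivative_identity_general {k1 K1 : ℝ → ℝ}
    (hK1 : ∀ y : ℝ, 0 < y → HasDerivAt K1 (k1 y) y) (k0 : ℝ) {u : ℝ → ℝ} {x : ℝ}
    (hu : DifferentiableAt ℝ u x) (hu' : DifferentiableAt ℝ (deriv u) x)
    (habs : |deriv u x| < |u x|) :
    HasDerivAt (fun y ↦
        (1/2) * K1 ((u y)^2 - (deriv u y)^2)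
          + (1/2) * k0 * log ((u y - deriv u y) / (u y + deriv u y))
          + k0 * y)
      ((deriv u x * k1 ((u x)^2 - (deriv u x)^2)
          + k0 * u x / ((u x)^2 - (deriv u x)^2))
        * (u x - deriv (deriv u) x)) x := by
  have hpos : 0 < u x ^ 2 - deriv u x ^ 2 := sub_pos.2 (sq_lt_sq.2 habs)
  have hK := (hK1 _ hpos).comp x (hasDerivAt_sq_sub_sq_deriv hu.hasDerivAt hu'.hasDerivAt)
  have hlog := hasDerivAt_half_log_sub_div_add_deriv_add_id hu.hasDerivAt hu'.hasDerivAt hpos.ne'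
  refine (((hK.const_mul (1 / 2)).fun_add (hlog.const_mul k0)).congr_deriv ?_).congr_of_eventuallyEq
    (.of_forall fun y ↦ ?_)
  · ring
  · simp only [Function.comp_apply]
    ring

/-- any expression `(u' k1(u²−u'²) + k0 u/(u²−u'²))·(u − u'')`
is a total `x`-derivative. -/
theorem total_derivative_identity
    (k1 : ℝ → ℝ) (hk1 : ContDiffOn ℝ (⊤ : ℕ∞) k1 (Set.Ioi 0))
    (K1 : ℝ → ℝ) (hK1 : ∀ y : ℝ, 0 < y → HasDerivAt K1 (k1 y) y)
    (k0 : ℝ)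
    (u : ℝ → ℝ) (hu : ContDiff ℝ 2 u)
    (hpos : ∀ x : ℝ, u x > |deriv u x|) :
    ∀ x : ℝ,
      deriv (fun y =>
          (1/2) * K1 ((u y)^2 - (deriv u y)^2)
            + (1/2) * k0 * Real.log ((u y - deriv u y) / (u y + deriv u y))
            + k0 * y) x
        = (deriv u x * k1 ((u x)^2 - (deriv u x)^2)
            + k0 * u x / ((u x)^2 - (deriv u x)^2))
          * (u x - deriv (deriv u) x) :=
  fun x ↦ (total_derivative_identity_general hK1 k0 (hu.differentiable two_ne_zero x)
    (hu.differentiable_deriv_two x) ((hpos x).trans_le (le_abs_self _))).deriv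
end
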